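/- There is a constant C, depending only on the dimension n, with the following property. Let n ≥ 2, let u : ℝⁿ → ℝⁿ be a Schwartz vector field with ∇·u = 0 everywhere, and let d : ℝⁿ → ℝ³ be smooth with ∇d a Schwartz function. Then | ∫_{ℝⁿ} Δ(u·∇d)·Δd dx | ≤ C ‖∇d‖_{L^∞} ( ‖Δu‖_{L²} ‖Δd‖_{L²} + ‖∇u‖_{L²} ‖∇Δd‖_{L²} ). -/

import Mathlib

open MeasureTheory Real

noncomputable section

/-- `pd i f x` is the `i`-th partial derivative `∂ᵢ f (x)` of `f : ℝⁿ → ℝ`. -/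
def pd {n : ℕ} (i : Fin n) (f : EuclideanSpace ℝ (Fin n) → ℝ)
    (x : EuclideanSpace ℝ (Fin n)) : ℝ :=
  fderiv ℝ f x (EuclideanSpace.single i 1)

/-- `lap f x` is the Laplacian `Δf(x) = Σᵢ ∂ᵢ∂ᵢ f (x)`. -/
def lap {n : ℕ} (f : EuclideanSpace ℝ (Fin n) → ℝ)
    (x : EuclideanSpace ℝ (Fin n)) : ℝ :=
  ∑ i, pd i (fun y => pd i f y) x

/-- ‖∇d‖_{L^∞}: essential supremum of |∇d| for d : ℝⁿ → ℝ³. -/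
def gradLinf {n : ℕ} (d : EuclideanSpace ℝ (Fin n) → EuclideanSpace ℝ (Fin 3)) : ℝ :=
  essSup (fun x => Real.sqrt (∑ i, ∑ k : Fin 3, (pd i (fun z => d z k) x) ^ 2)) volume

/-- ‖Δd‖_{L²} for d : ℝⁿ → ℝ³. -/
def lapL2 {n : ℕ} (d : EuclideanSpace ℝ (Fin n) → EuclideanSpace ℝ (Fin 3)) : ℝ :=
  Real.sqrt (∑ k : Fin 3, ∫ x, (lap (fun z => d z k) x) ^ 2)

/-- ‖∇²d‖_{L²} for d : ℝⁿ → ℝ³. -/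
def hessL2 {n : ℕ} (d : EuclideanSpace ℝ (Fin n) → EuclideanSpace ℝ (Fin 3)) : ℝ :=
  Real.sqrt (∑ i, ∑ j, ∑ k : Fin 3, ∫ x, (pd i (pd j (fun z => d z k)) x) ^ 2)

/-- ‖∇Δd‖_{L²} for d : ℝⁿ → ℝ³. -/
def gradLapL2 {n : ℕ} (d : EuclideanSpace ℝ (Fin n) → EuclideanSpace ℝ (Fin 3)) : ℝ :=
  Real.sqrt (∑ i, ∑ k : Fin 3, ∫ x, (pd i (lap (fun z => d z k)) x) ^ 2)

/-- ‖∇u‖_{L²} for a vector field u : ℝⁿ → ℝⁿ. -/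
def gradL2u {n : ℕ} (u : EuclideanSpace ℝ (Fin n) → EuclideanSpace ℝ (Fin n)) : ℝ :=
  Real.sqrt (∑ i, ∑ j, ∫ x, (pd i (fun y => u y j) x) ^ 2)

/-- ‖Δu‖_{L²} for a vector field u : ℝⁿ → ℝⁿ. -/
def lapL2u {n : ℕ} (u : EuclideanSpace ℝ (Fin n) → EuclideanSpace ℝ (Fin n)) : ℝ :=
  Real.sqrt (∑ i, ∫ x, (lap (fun y => u y i) x) ^ 2)

/-!
Expanding `Δ(u·∇d) = Δu·∇d + 2 ∑ⱼ ∂ⱼu·∇∂ⱼd + u·∇Δd` and pairing with `Δd`, the last term vanishes: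
it is the transport of `|Δd|²/2` by a divergence-free field. Integrating by parts in `∂ⱼ` moves one
derivative off the Hessian of `d` in the middle term, so that

  `∫ Δ(u·∇d)·Δd = -∫ (Δu·∇d)·Δd - 2 ∑ⱼ ∫ (∂ⱼu·∇d)·∂ⱼΔd`,

where `d` enters the first factor only through `∇d`. Applying the Cauchy–Schwarz inequality to the
components pointwise, then in `L²`, and finally in the sum over `j` gives the estimate with
constant `2`.
-/

open scoped SchwartzMap

section CauchySchwarz

variable {α ι κ : Type*} [Fintype ι] [Fintype κ]

lemma abs_sum_sum_mul_mul_le (a : ι → ℝ) (c : ι → κ → ℝ) (b : κ → ℝ) :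
    |∑ i, ∑ k, a i * c i k * b k| ≤
      √(∑ i, ∑ k, c i k ^ 2) * (√(∑ i, a i ^ 2) * √(∑ k, b k ^ 2)) := by
  have hc : 0 ≤ ∑ i, ∑ k, c i k ^ 2 := by positivity
  have ha : 0 ≤ ∑ i, a i ^ 2 := by positivity
  rw [← sqrt_mul ha, ← sqrt_mul hc]
  apply abs_le_sqrt
  calc (∑ i, ∑ k, a i * c i k * b k) ^ 2
      = (∑ p : ι × κ, c p.1 p.2 * (a p.1 * b p.2)) ^ 2 := by
        rw [Fintype.sum_prod_type]
        congr! 3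
        ring
    _ ≤ (∑ p : ι × κ, c p.1 p.2 ^ 2) * ∑ p : ι × κ, (a p.1 * b p.2) ^ 2 :=
        Finset.sum_mul_sq_le_sq_mul_sq _ _ _
    _ = (∑ i, ∑ k, c i k ^ 2) * ((∑ i, a i ^ 2) * ∑ k, b k ^ 2) := by
        simp only [Fintype.sum_prod_type, mul_pow, Finset.sum_mul_sum]

lemma isBoundedUnder_sqrt_sum_sum_sq {l : Filter α} {c : ι → κ → α → ℝ}
    (hc : ∀ i k, ∃ C, ∀ x, |c i k x| ≤ C) :
    l.IsBoundedUnder (· ≤ ·) fun x => √(∑ i, ∑ k, c i k x ^ 2) := by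
  choose C hC using hc
  refine Filter.isBoundedUnder_of ⟨√(∑ i, ∑ k, C i k ^ 2), fun x => ?_⟩
  gcongr √(∑ i, ∑ k, ?_) with i _ k _
  exact sq_le_sq.2 ((hC i k x).trans (le_abs_self _))

variable [MeasurableSpace α] {μ : Measure α}

lemma integral_norm_mul_norm_le_sqrt_mul_sqrt {E F : Type*} [NormedAddCommGroup E]
    [NormedAddCommGroup F] {a : α → E} {b : α → F} (ha : MemLp a 2 μ) (hb : MemLp b 2 μ) :
    ∫ x, ‖a x‖ * ‖b x‖ ∂μ ≤ √(∫ x, ‖a x‖ ^ 2 ∂μ) * √(∫ x, ‖b x‖ ^ 2 ∂μ) := by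
  have h := integral_mul_norm_le_Lp_mul_Lq (f := fun x => ‖a x‖) (g := fun x => ‖b x‖)
    HolderConjugate.two_two (by simpa using ha.norm) (by simpa using hb.norm)
  simpa [sqrt_eq_rpow] using h

lemma abs_integral_sum_sum_mul_mul_le {a : ι → α → ℝ} {c : ι → κ → α → ℝ} {b : κ → α → ℝ} {M : ℝ}
    (ha : ∀ i, MemLp (a i) 2 μ) (hb : ∀ k, MemLp (b k) 2 μ)
    (hM : 0 ≤ M) (hc : ∀ᵐ x ∂μ, √(∑ i, ∑ k, c i k x ^ 2) ≤ M) :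
    |∫ x, ∑ i, ∑ k, a i x * c i k x * b k x ∂μ| ≤
      M * (√(∑ i, ∫ x, a i x ^ 2 ∂μ) * √(∑ k, ∫ x, b k x ^ 2 ∂μ)) := by
  let A (x : α) : EuclideanSpace ℝ ι := WithLp.toLp 2 fun i => a i x
  let B (x : α) : EuclideanSpace ℝ κ := WithLp.toLp 2 fun k => b k x
  have hA : MemLp A 2 μ := memLp_piLp_iff.2 ha
  have hB : MemLp B 2 μ := memLp_piLp_iff.2 hb
  have hA_sq : ∫ x, ‖A x‖ ^ 2 ∂μ = ∑ i, ∫ x, a i x ^ 2 ∂μ := by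
    rw [← integral_finsetSum _ fun i _ => (ha i).integrable_sq]
    simp [A, EuclideanSpace.norm_sq_eq]
  have hB_sq : ∫ x, ‖B x‖ ^ 2 ∂μ = ∑ k, ∫ x, b k x ^ 2 ∂μ := by
    rw [← integral_finsetSum _ fun k _ => (hb k).integrable_sq]
    simp [B, EuclideanSpace.norm_sq_eq]
  have hpointwise : ∀ᵐ x ∂μ, ‖∑ i, ∑ k, a i x * c i k x * b k x‖ ≤ M * (‖A x‖ * ‖B x‖) := by
    filter_upwards [hc] with x hx
    grw [norm_eq_abs, abs_sum_sum_mul_mul_le, hx]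
    simp [A, B, EuclideanSpace.norm_eq]
  calc |∫ x, ∑ i, ∑ k, a i x * c i k x * b k x ∂μ|
      ≤ ∫ x, M * (‖A x‖ * ‖B x‖) ∂μ :=
        norm_integral_le_of_norm_le ((hA.norm.integrable_mul hB.norm).const_mul M) hpointwise
    _ = M * ∫ x, ‖A x‖ * ‖B x‖ ∂μ := integral_const_mul _ _
    _ ≤ M * (√(∑ i, ∫ x, a i x ^ 2 ∂μ) * √(∑ k, ∫ x, b k x ^ 2 ∂μ)) := by
        rw [← hA_sq, ← hB_sq]
        gcongr
        exact integral_norm_mul_norm_le_sqrt_mul_sqrt hA hB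

lemma abs_sum_integral_sum_sum_mul_mul_le {J : Type*} [Fintype J] {a : J → ι → α → ℝ}
    {c : ι → κ → α → ℝ} {b : J → κ → α → ℝ} {M : ℝ}
    (ha : ∀ j i, MemLp (a j i) 2 μ) (hb : ∀ j k, MemLp (b j k) 2 μ)
    (hM : 0 ≤ M) (hc : ∀ᵐ x ∂μ, √(∑ i, ∑ k, c i k x ^ 2) ≤ M) :
    |∑ j, ∫ x, ∑ i, ∑ k, a j i x * c i k x * b j k x ∂μ| ≤
      M * (√(∑ j, ∑ i, ∫ x, a j i x ^ 2 ∂μ) * √(∑ j, ∑ k, ∫ x, b j k x ^ 2 ∂μ)) :=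
  calc |∑ j, ∫ x, ∑ i, ∑ k, a j i x * c i k x * b j k x ∂μ|
      ≤ ∑ j, |∫ x, ∑ i, ∑ k, a j i x * c i k x * b j k x ∂μ| := Finset.abs_sum_le_sum_abs _ _
    _ ≤ ∑ j, M * (√(∑ i, ∫ x, a j i x ^ 2 ∂μ) * √(∑ k, ∫ x, b j k x ^ 2 ∂μ)) :=
        Finset.sum_le_sum fun j _ => abs_integral_sum_sum_mul_mul_le (ha j) (hb j) hM hc
    _ ≤ M * (√(∑ j, ∑ i, ∫ x, a j i x ^ 2 ∂μ) * √(∑ j, ∑ k, ∫ x, b j k x ^ 2 ∂μ)) := by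
        rw [← Finset.mul_sum]
        gcongr
        exact sum_sqrt_mul_sqrt_le _ (fun _ => by positivity) (fun _ => by positivity)

end CauchySchwarz

section PartialDerivatives

variable {n : ℕ} {ι : Type*} {f g : EuclideanSpace ℝ (Fin n) → ℝ} {x : EuclideanSpace ℝ (Fin n)}

lemma pd_add (i : Fin n) (hf : DifferentiableAt ℝ f x) (hg : DifferentiableAt ℝ g x) :
    pd i (fun y => f y + g y) x = pd i f x + pd i g x := by
  simp [pd, fderiv_fun_add hf hg]

lemma pd_mul (i : Fin n) (hf : DifferentiableAt ℝ f x) (hg : DifferentiableAt ℝ g x) :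
    pd i (fun y => f y * g y) x = pd i f x * g x + f x * pd i g x := by
  simp [pd, fderiv_fun_mul hf hg]
  ring

lemma pd_sum (i : Fin n) {s : Finset ι} {f : ι → EuclideanSpace ℝ (Fin n) → ℝ}
    (hf : ∀ j ∈ s, DifferentiableAt ℝ (f j) x) :
    pd i (fun y => ∑ j ∈ s, f j y) x = ∑ j ∈ s, pd i (f j) x := by
  simp [pd, fderiv_fun_sum hf]

lemma contDiff_pd (i : Fin n) {m k : WithTop ℕ∞} (hf : ContDiff ℝ k f) (hmk : m + 1 ≤ k) :
    ContDiff ℝ m (pd i f) :=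
  (hf.fderiv_right hmk).clm_apply contDiff_const

lemma differentiable_pd (i : Fin n) (hf : ContDiff ℝ 2 f) : Differentiable ℝ (pd i f) :=
  (contDiff_pd (m := 1) i hf one_add_one_eq_two.le).differentiable one_ne_zero

lemma pd_comm (i j : Fin n) (hf : ContDiff ℝ 2 f) : pd i (pd j f) = pd j (pd i f) := by
  have hf' : Differentiable ℝ (fderiv ℝ f) :=
    (hf.fderiv_right (m := 1) one_add_one_eq_two.le).differentiable one_ne_zero
  have pd_pd (i j : Fin n) (x) : pd i (pd j f) x =
      fderiv ℝ (fderiv ℝ f) x (EuclideanSpace.single i 1) (EuclideanSpace.single j 1) := by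
    change fderiv ℝ (fun y => fderiv ℝ f y (EuclideanSpace.single j 1)) x _ = _
    simp [fderiv_clm_apply (hf' x) (differentiableAt_const _)]
  funext x
  rw [pd_pd, pd_pd]
  exact hf.contDiffAt.isSymmSndFDerivAt (by simp) _ _

lemma lap_mul (hf : ContDiff ℝ 2 f) (hg : ContDiff ℝ 2 g) :
    lap (fun y => f y * g y) x = lap f x * g x + 2 * ∑ j, pd j f x * pd j g x + f x * lap g x := by
  have hf₀ := hf.differentiable two_ne_zero
  have hg₀ := hg.differentiable two_ne_zero
  have hf₁ (j) := differentiable_pd j hf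
  have hg₁ (j) := differentiable_pd j hg
  simp only [lap, Finset.sum_mul, Finset.mul_sum, ← Finset.sum_add_distrib]
  refine Finset.sum_congr rfl fun j _ => ?_
  simp only [pd_mul j (hf₀ _) (hg₀ _)]
  rw [pd_add j ((hf₁ j x).fun_mul (hg₀ x)) ((hf₀ x).fun_mul (hg₁ j x)), pd_mul j (hf₁ j x) (hg₀ x),
    pd_mul j (hf₀ x) (hg₁ j x)]
  ring

lemma lap_sum {s : Finset ι} {f : ι → EuclideanSpace ℝ (Fin n) → ℝ}
    (hf : ∀ i ∈ s, ContDiff ℝ 2 (f i)) :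
    lap (fun y => ∑ i ∈ s, f i y) x = ∑ i ∈ s, lap (f i) x := by
  simp only [lap]
  rw [Finset.sum_comm]
  refine Finset.sum_congr rfl fun j _ => ?_
  simp only [pd_sum j fun i hi => (hf i hi).differentiable two_ne_zero _]
  exact pd_sum j fun i hi => differentiable_pd j (hf i hi) x

lemma lap_pd (i : Fin n) (hf : ContDiff ℝ 3 f) : lap (pd i f) = pd i (lap f) := by
  have hf₁ (j) : ContDiff ℝ 2 (pd j f) := contDiff_pd j hf two_add_one_eq_three.le
  have hf₀ : ContDiff ℝ 2 f := hf.of_le (by norm_num)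
  funext x
  calc lap (pd i f) x = ∑ j, pd j (pd j (pd i f)) x := rfl
    _ = ∑ j, pd i (pd j (pd j f)) x :=
        Finset.sum_congr rfl fun j _ => by rw [pd_comm j i hf₀, pd_comm j i (hf₁ j)]
    _ = pd i (lap f) x := (pd_sum i fun j _ => differentiable_pd j (hf₁ j) x).symm

end PartialDerivatives

/-- A real-valued function is Schwartz if it underlies a Schwartz map. The predicate lets the
unbundled derivatives `pd` and `lap` and pointwise products be handled without naming the
corresponding bundled maps. -/
def IsSchwartz {E : Type*} [NormedAddCommGroup E] [NormedSpace ℝ E] (f : E → ℝ) : Prop :=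
  ∃ F : 𝓢(E, ℝ), ⇑F = f

namespace IsSchwartz

variable {E : Type*} [NormedAddCommGroup E] [NormedSpace ℝ E] {f g : E → ℝ}

lemma coord {ι : Type*} [Fintype ι] (u : 𝓢(E, EuclideanSpace ℝ ι)) (i : ι) :
    IsSchwartz fun x => u x i :=
  ⟨SchwartzMap.postcompCLM (𝕜 := ℝ) (EuclideanSpace.proj i) u, rfl⟩

protected lemma contDiff (hf : IsSchwartz f) (m : ℕ∞) : ContDiff ℝ m f := by
  obtain ⟨F, rfl⟩ := hf
  exact F.smooth m

protected lemma differentiable (hf : IsSchwartz f) : Differentiable ℝ f :=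
  (hf.contDiff 1).differentiable one_ne_zero

lemma exists_abs_le (hf : IsSchwartz f) : ∃ C, ∀ x, |f x| ≤ C := by
  obtain ⟨F, rfl⟩ := hf
  obtain ⟨C, -, hC⟩ := F.decay 0 0
  exact ⟨C, fun x => by simpa using hC x⟩

protected lemma mul (hf : IsSchwartz f) (hg : IsSchwartz g) : IsSchwartz fun x => f x * g x := by
  obtain ⟨F, rfl⟩ := hf
  obtain ⟨G, rfl⟩ := hg
  exact ⟨SchwartzMap.pairing (ContinuousLinearMap.mul ℝ ℝ) F G, rfl⟩

protected lemma sum {ι : Type*} {s : Finset ι} {f : ι → E → ℝ} (hf : ∀ i ∈ s, IsSchwartz (f i)) :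
    IsSchwartz fun x => ∑ i ∈ s, f i x := by
  choose! F hF using hf
  refine ⟨∑ i ∈ s, F i, funext fun x => ?_⟩
  rw [sum_apply]
  exact Finset.sum_congr rfl fun i hi => congrFun (hF i hi) x

section Measure

variable [MeasurableSpace E] [BorelSpace E] {μ : Measure E} [μ.HasTemperateGrowth]

protected lemma integrable [SecondCountableTopology E] (hf : IsSchwartz f) : Integrable f μ := by
  obtain ⟨F, rfl⟩ := hf
  exact F.integrable

protected lemma memLp (hf : IsSchwartz f) (p : ENNReal) : MemLp f p μ := by
  obtain ⟨F, rfl⟩ := hf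
  exact F.memLp p μ

end Measure

variable {n : ℕ} {f g w : EuclideanSpace ℝ (Fin n) → ℝ}

protected lemma pd (i : Fin n) (hf : IsSchwartz f) : IsSchwartz (pd i f) := by
  obtain ⟨F, rfl⟩ := hf
  exact ⟨LineDeriv.lineDerivOp (EuclideanSpace.single i (1 : ℝ)) F,
    funext (SchwartzMap.lineDerivOp_apply_eq_fderiv _ F)⟩

lemma lap_of_pd (hf : ∀ i, IsSchwartz (pd i f)) : IsSchwartz (lap f) :=
  .sum fun i _ => (hf i).pd i

protected lemma lap (hf : IsSchwartz f) : IsSchwartz (lap f) :=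
  lap_of_pd fun i => hf.pd i

lemma integral_mul_pd (i : Fin n) (hf : IsSchwartz f) (hg : IsSchwartz g) :
    ∫ x, f x * pd i g x = -∫ x, pd i f x * g x :=
  integral_mul_fderiv_eq_neg_fderiv_mul_of_integrable ((hf.pd i).mul hg).integrable
    (hf.mul (hg.pd i)).integrable (hf.mul hg).integrable
    (fun x _ => hf.differentiable x) (fun x _ => hg.differentiable x)

lemma integral_pd_mul_pd_mul (j : Fin n) (hf : IsSchwartz f) (hg : IsSchwartz g)
    (hw : IsSchwartz w) :
    ∫ x, pd j f x * pd j g x * w x =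
      -(∫ x, pd j (pd j f) x * g x * w x) - ∫ x, pd j f x * g x * pd j w x := by
  have hf' := hf.pd j
  calc ∫ x, pd j f x * pd j g x * w x = ∫ x, pd j f x * w x * pd j g x := by
        simp only [mul_right_comm]
    _ = -∫ x, pd j (fun y => pd j f y * w y) x * g x := (hf'.mul hw).integral_mul_pd j hg
    _ = -∫ x, (pd j (pd j f) x * g x * w x + pd j f x * g x * pd j w x) := by
        simp only [pd_mul j (hf'.differentiable _) (hw.differentiable _), add_mul, mul_right_comm]
    _ = -(∫ x, pd j (pd j f) x * g x * w x) - ∫ x, pd j f x * g x * pd j w x := by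
        rw [integral_add (((hf'.pd j).mul hg).mul hw).integrable
          ((hf'.mul hg).mul (hw.pd j)).integrable, neg_add']

/-- Only the mixed term `2∇f·∇g` of `Δ(fg)` is integrated by parts, so that no second derivative
of `g` is left outside the term `f Δg`. -/
lemma integral_lap_mul_mul (hf : IsSchwartz f) (hg : IsSchwartz g) (hw : IsSchwartz w) :
    ∫ x, lap (fun y => f y * g y) x * w x =
      -(∫ x, lap f x * g x * w x) - 2 * (∑ j, ∫ x, pd j f x * g x * pd j w x)
        + ∫ x, f x * lap g x * w x := by
  have hmixed : ∑ j, ∫ x, pd j f x * pd j g x * w x =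
      -(∫ x, lap f x * g x * w x) - ∑ j, ∫ x, pd j f x * g x * pd j w x := by
    simp only [hf.integral_pd_mul_pd_mul _ hg hw, lap, Finset.sum_mul, Finset.sum_sub_distrib,
      Finset.sum_neg_distrib]
    rw [integral_finsetSum _ fun j _ => ((((hf.pd j).pd j).mul hg).mul hw).integrable]
  have hmixed_int (j) : Integrable fun x => pd j f x * pd j g x * w x :=
    (((hf.pd j).mul (hg.pd j)).mul hw).integrable
  calc ∫ x, lap (fun y => f y * g y) x * w x
      = ∫ x, (lap f x * g x * w x + 2 * (∑ j, pd j f x * pd j g x * w x)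
          + f x * lap g x * w x) := by
        simp only [lap_mul (hf.contDiff 2) (hg.contDiff 2), add_mul, Finset.sum_mul, mul_assoc]
    _ = (∫ x, lap f x * g x * w x) + 2 * (∑ j, ∫ x, pd j f x * pd j g x * w x)
          + ∫ x, f x * lap g x * w x := by
        have hlap_left := ((hf.lap.mul hg).mul hw).integrable (μ := volume)
        have hmixed_sum := (integrable_finsetSum Finset.univ fun j _ => hmixed_int j).const_mul 2
        rw [integral_add (hlap_left.fun_add hmixed_sum) ((hf.mul hg.lap).mul hw).integrable,
          integral_add hlap_left hmixed_sum, integral_const_mul,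
          integral_finsetSum _ fun j _ => hmixed_int j]
    _ = _ := by
        rw [hmixed]
        ring

end IsSchwartz

section Advection

variable {n : ℕ} {κ : Type*} [Fintype κ] {u : Fin n → EuclideanSpace ℝ (Fin n) → ℝ}
  {f w : EuclideanSpace ℝ (Fin n) → ℝ}

/-- The derivative `u·∇f` of a scalar function along the vector field with components `u i`. -/
def advection (u : Fin n → EuclideanSpace ℝ (Fin n) → ℝ) (f : EuclideanSpace ℝ (Fin n) → ℝ)
    (x : EuclideanSpace ℝ (Fin n)) : ℝ :=
  ∑ i, u i x * pd i f x

lemma IsSchwartz.advection (hu : ∀ i, IsSchwartz (u i)) (hf : ∀ i, IsSchwartz (pd i f)) :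
    IsSchwartz (advection u f) :=
  .sum fun i _ => (hu i).mul (hf i)

lemma integral_advection_mul_self_eq_zero (hu : ∀ i, IsSchwartz (u i)) (hw : IsSchwartz w)
    (hdiv : ∀ x, ∑ i, pd i (u i) x = 0) : ∫ x, advection u w x * w x = 0 := by
  have hsq := hw.mul hw
  suffices 2 * ∫ x, advection u w x * w x = 0 by simpa using this
  calc 2 * ∫ x, advection u w x * w x = ∫ x, ∑ i, u i x * pd i (fun y => w y * w y) x := by
        simp only [← integral_const_mul, advection, Finset.sum_mul, Finset.mul_sum,
          pd_mul _ (hw.differentiable _) (hw.differentiable _)]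
        congr! 3
        ring
    _ = ∑ i, ∫ x, u i x * pd i (fun y => w y * w y) x :=
        integral_finsetSum _ fun i _ => ((hu i).mul (hsq.pd i)).integrable
    _ = -∑ i, ∫ x, pd i (u i) x * (w x * w x) := by
        simp only [(hu _).integral_mul_pd _ hsq, Finset.sum_neg_distrib]
    _ = -∫ x, (∑ i, pd i (u i) x) * (w x * w x) := by
        simp only [Finset.sum_mul]
        rw [integral_finsetSum _ fun i _ => (((hu i).pd i).mul hsq).integrable]
    _ = 0 := by simp [hdiv]

lemma integral_lap_advection_mul_lap (hu : ∀ i, IsSchwartz (u i))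
    (hdiv : ∀ x, ∑ i, pd i (u i) x = 0) (hf : ContDiff ℝ 3 f) (hf' : ∀ i, IsSchwartz (pd i f)) :
    ∫ x, lap (advection u f) x * lap f x =
      -(∑ i, ∫ x, lap (u i) x * pd i f x * lap f x)
        - 2 * (∑ j, ∑ i, ∫ x, pd j (u i) x * pd i f x * pd j (lap f) x) := by
  have hw : IsSchwartz (lap f) := .lap_of_pd hf'
  have hproduct (x) : lap (advection u f) x = ∑ i, lap (fun y => u i y * pd i f y) x :=
    lap_sum fun i _ => ((hu i).mul (hf' i)).contDiff 2
  have htransport : ∑ i, ∫ x, u i x * pd i (lap f) x * lap f x = 0 := by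
    rw [← integral_finsetSum _ fun i _ => (((hu i).mul (hw.pd i)).mul hw).integrable]
    simpa only [advection, Finset.sum_mul] using integral_advection_mul_self_eq_zero hu hw hdiv
  calc ∫ x, lap (advection u f) x * lap f x
      = ∑ i, ∫ x, lap (fun y => u i y * pd i f y) x * lap f x := by
        rw [← integral_finsetSum _ fun i _ => (((hu i).mul (hf' i)).lap.mul hw).integrable]
        simp only [← Finset.sum_mul, hproduct]
    _ = _ := by
        simp only [(hu _).integral_lap_mul_mul (hf' _) hw, lap_pd _ hf, Finset.sum_add_distrib,
          htransport, Finset.sum_sub_distrib, Finset.sum_neg_distrib, ← Finset.mul_sum, add_zero]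
        rw [Finset.sum_comm]

lemma integral_sum_lap_advection_mul_lap {f : κ → EuclideanSpace ℝ (Fin n) → ℝ}
    (hu : ∀ i, IsSchwartz (u i)) (hdiv : ∀ x, ∑ i, pd i (u i) x = 0)
    (hf : ∀ k, ContDiff ℝ 3 (f k)) (hf' : ∀ i k, IsSchwartz (pd i (f k))) :
    ∫ x, ∑ k, lap (advection u (f k)) x * lap (f k) x =
      -(∫ x, ∑ i, ∑ k, lap (u i) x * pd i (f k) x * lap (f k) x)
        - 2 * ∑ j, ∫ x, ∑ i, ∑ k, pd j (u i) x * pd i (f k) x * pd j (lap (f k)) x := by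
  have hw (k) : IsSchwartz (lap (f k)) := .lap_of_pd fun i => hf' i k
  have hlap (i k) : IsSchwartz fun x => lap (u i) x * pd i (f k) x * lap (f k) x :=
    ((hu i).lap.mul (hf' i k)).mul (hw k)
  have hgrad (j i k) : IsSchwartz fun x => pd j (u i) x * pd i (f k) x * pd j (lap (f k)) x :=
    (((hu i).pd j).mul (hf' i k)).mul ((hw k).pd j)
  have hadv (k) : IsSchwartz fun x => lap (advection u (f k)) x * lap (f k) x :=
    (IsSchwartz.advection hu fun i => hf' i k).lap.mul (hw k)
  have integral_sum_sum {F : Fin n → κ → EuclideanSpace ℝ (Fin n) → ℝ}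
      (hF : ∀ i k, IsSchwartz (F i k)) :
      ∫ x, ∑ i, ∑ k, F i k x = ∑ k, ∑ i, ∫ x, F i k x := by
    rw [integral_finsetSum _ fun i _ => (IsSchwartz.sum fun k _ => hF i k).integrable,
      Finset.sum_comm]
    exact Finset.sum_congr rfl fun i _ => integral_finsetSum _ fun k _ => (hF i k).integrable
  rw [integral_finsetSum _ fun k _ => (hadv k).integrable, integral_sum_sum hlap]
  simp only [integral_sum_sum (hgrad _),
    integral_lap_advection_mul_lap hu hdiv (hf _) fun i => hf' i _,
    Finset.sum_sub_distrib, Finset.sum_neg_distrib, ← Finset.mul_sum]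
  congr 2
  exact Finset.sum_comm

end Advection

theorem statement13_general {n : ℕ} {κ : Type*} [Fintype κ]
    {u : Fin n → EuclideanSpace ℝ (Fin n) → ℝ} {d : κ → EuclideanSpace ℝ (Fin n) → ℝ}
    (hu : ∀ i, IsSchwartz (u i)) (hdiv : ∀ x, ∑ i, pd i (u i) x = 0)
    (hd : ∀ k, ContDiff ℝ 3 (d k)) (hgrad : ∀ i k, IsSchwartz (pd i (d k))) :
    |∫ x, ∑ k, lap (advection u (d k)) x * lap (d k) x| ≤
      2 * (essSup (fun x => √(∑ i, ∑ k, pd i (d k) x ^ 2)) volume *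
        (√(∑ i, ∫ x, lap (u i) x ^ 2) * √(∑ k, ∫ x, lap (d k) x ^ 2) +
          √(∑ j, ∑ i, ∫ x, pd j (u i) x ^ 2) * √(∑ j, ∑ k, ∫ x, pd j (lap (d k)) x ^ 2))) := by
  have hw (k) : IsSchwartz (lap (d k)) := .lap_of_pd fun i => hgrad i k
  set M := essSup (fun x => √(∑ i, ∑ k, pd i (d k) x ^ 2)) volume
  have hM : ∀ᵐ x, √(∑ i, ∑ k, pd i (d k) x ^ 2) ≤ M :=
    ae_le_essSup (isBoundedUnder_sqrt_sum_sum_sq fun i k => (hgrad i k).exists_abs_le)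
  have hM_nonneg : 0 ≤ M := hM.exists.elim fun x hx => (sqrt_nonneg _).trans hx
  have hlap_bound := abs_integral_sum_sum_mul_mul_le (fun i => (hu i).lap.memLp 2)
    (fun k => (hw k).memLp 2) hM_nonneg hM
  have hgrad_bound := abs_sum_integral_sum_sum_mul_mul_le (fun j i => ((hu i).pd j).memLp 2)
    (fun j k => ((hw k).pd j).memLp 2) hM_nonneg hM
  have hlap_nonneg := (abs_nonneg _).trans hlap_bound
  rw [integral_sum_lap_advection_mul_lap hu hdiv hd hgrad]
  grw [abs_sub, abs_neg, abs_mul, abs_two, hlap_bound, hgrad_bound]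
  linarith

/-- |∫ Δ(u·∇d)·Δd| ≤ C ‖∇d‖_{L^∞}(‖Δu‖_{L²}‖Δd‖_{L²} + ‖∇u‖_{L²}‖∇Δd‖_{L²}),
with C depending only on n, for divergence-free Schwartz u. -/
theorem statement13 (n : ℕ) (hn : 2 ≤ n) :
    ∃ C : ℝ, ∀ (u : SchwartzMap (EuclideanSpace ℝ (Fin n)) (EuclideanSpace ℝ (Fin n)))
      (d : EuclideanSpace ℝ (Fin n) → EuclideanSpace ℝ (Fin 3)),
      (∀ x, ∑ i, pd i (fun y => u y i) x = 0) →
      ContDiff ℝ (⊤ : ℕ∞) d →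
      (∀ (i : Fin n) (k : Fin 3),
        ∃ g : SchwartzMap (EuclideanSpace ℝ (Fin n)) ℝ,
          ∀ x, g x = pd i (fun z => d z k) x) →
      |∫ x, ∑ k : Fin 3,
          lap (fun y => ∑ i, u y i * pd i (fun z => d z k) y) x * lap (fun z => d z k) x|
        ≤ C * (gradLinf d *
            (lapL2u (fun y => u y) * lapL2 d + gradL2u (fun y => u y) * gradLapL2 d)) := by
  exact ⟨2, fun u d hdiv hd hgrad => statement13_general (.coord u) hdiv
    (contDiff_euclidean.1 (contDiff_infty.1 hd 3)) fun i k => (hgrad i k).imp fun _ => funext⟩
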